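/- Fix a positive integer s ≥ 1. For all but finitely many pairs of integers (k,n) with 1 < k < n-1 (the number of exceptional pairs depending on s), the following holds: if A is a set of n positive integers with d^s_k(A) ≥ C(n-1,k), then A is a (k,s)-anti-pencil. Formally: for each fixed s, the set of pairs (k,n) with 1 < k < n-1 for which there exists a set A of n positive integers with d^s_k(A) ≥ C(n-1,k) that is not a (k,s)-anti-pencil is finite. -/

import Mathlib

/-!
Divide the elements of `A` by their total, so that they become weights of sum `1` and a nonempty
`s`-divisor is a set of weight `s / m` with `m` a positive integer. An `s`-divisor other than `A`
has weight less than `1`, hence at most `s / (s + 1)`. If `max A` is heavier than this, no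
`s`-divisor other than `A` contains it, and having `C(n-1, k)` of them forces an anti-pencil.

Otherwise the number of `k`-element `s`-divisors is less than `C(n-1, k)` once `n` is large. Two
sets of equal weight never differ in one element only, so at most `2 C(n, k) / n` sets of size `k`
have a prescribed weight, and only `s / d` of the values `s / m` are at least `d`.

* If `k` is at least a constant times `n`, few `k`-sets are much lighter than average, and the
  heavier ones are controlled by the packing bound. Since the members have weight at most
  `s / (s + 1)`, a member misses a random element, chosen according to the weights, with probability
  at least `1 / (s + 1)`: this reduces to sets that avoid a given element and replaces `C(n, k)` by
  `C(n-1, k)`.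
* If `k` is small compared to `n` and two elements have weight at least `10 s / (n-1)`, the packing
  bound leaves few `s`-divisors through either of them.
* If `k` is small and all elements but one, `z`, are lighter than that, then almost all `k`-sets
  avoiding `z` would have to be `s`-divisors. There are then a `(k-2)`-set `P` and two elements
  `x`, `x'` whose weights differ by `O(1 / n²)` such that `P ∪ {x, y}` and `P ∪ {x', y}` are both
  `s`-divisors for most `y`. But only boundedly many pairs of values `s / f`, `s / g` of order at
  least `1 / n` are that close and have a prescribed difference.
-/

/-- `d^s_k(A)`: the number of `k`-element subsets of `A` that are `s`-divisors of `A`,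
where `B` is an `s`-divisor of `A` if `∑ B` divides `s · ∑ A`. -/
def dsk (s k : ℕ) (A : Finset ℕ) : ℕ :=
  ((A.powersetCard k).filter (fun B => B.sum id ∣ s * A.sum id)).card

/-- `A` is a `(k,s)`-anti-pencil if the `k`-element subsets of `A` that are `s`-divisors
of `A` are exactly the `k`-element subsets of `A \ {max A}`. -/
def IsAntiPencil (s k : ℕ) (A : Finset ℕ) : Prop :=
  ∃ h : A.Nonempty,
    (A.powersetCard k).filter (fun B => B.sum id ∣ s * A.sum id)
      = (A.erase (A.max' h)).powersetCard k

section Packing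

open Finset

variable {α : Type*} {A : Finset α} {k : ℕ}

theorem eq_of_subset_of_sum_eq {M : Type*} [AddCancelCommMonoid M] {w : α → M}
    (hw : Set.InjOn w A) {P R R' : Finset α} (hR : R ⊆ A) (hR' : R' ⊆ A) (hPR : P ⊆ R)
    (hPR' : P ⊆ R') (hcard : #P + 1 = #R) (hcard' : #P + 1 = #R')
    (hsum : ∑ x ∈ R, w x = ∑ x ∈ R', w x) : R = R' := by
  classical
  obtain ⟨x, hxP, rfl⟩ := exists_eq_insert_iff.2 ⟨hPR, hcard⟩
  obtain ⟨y, hyP, rfl⟩ := exists_eq_insert_iff.2 ⟨hPR', hcard'⟩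
  rw [sum_insert hxP, sum_insert hyP] at hsum
  rw [hw (hR (mem_insert_self x P)) (hR' (mem_insert_self y P)) (add_right_cancel hsum)]

theorem card_mul_succ_le_choose_mul_card {M : Type*} [AddCancelCommMonoid M] {w : α → M}
    (hw : Set.InjOn w A) {V : Finset M} {𝓕 : Finset (Finset α)}
    (h𝓕 : 𝓕 ⊆ A.powersetCard (k + 1)) (hV : ∀ R ∈ 𝓕, ∑ x ∈ R, w x ∈ V) :
    #𝓕 * (k + 1) ≤ (#A).choose k * #V := by
  classical
  rw [← card_powersetCard k A]
  refine card_mul_le_card_mul (fun R P ↦ P ⊆ R) (fun R hR ↦ ?_) fun P hP ↦ ?_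
  · obtain ⟨hRA, hRcard⟩ := mem_powersetCard.1 (h𝓕 hR)
    calc k + 1 = #(R.powersetCard k) := by simp [hRcard]
      _ ≤ _ := card_le_card fun P hP ↦ by
        obtain ⟨hPR, hPcard⟩ := mem_powersetCard.1 hP
        exact (mem_bipartiteAbove _).2 ⟨mem_powersetCard.2 ⟨hPR.trans hRA, hPcard⟩, hPR⟩
  · have hPcard := (mem_powersetCard.1 hP).2
    refine card_le_card_of_injOn _ (fun R hR ↦ hV R ((mem_bipartiteBelow _).1 hR).1) ?_
    intro R hR R' hR' hsum
    obtain ⟨hR, hPR⟩ := (mem_bipartiteBelow _).1 hR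
    obtain ⟨hR', hPR'⟩ := (mem_bipartiteBelow _).1 hR'
    obtain ⟨hRA, hRcard⟩ := mem_powersetCard.1 (h𝓕 hR)
    obtain ⟨hRA', hRcard'⟩ := mem_powersetCard.1 (h𝓕 hR')
    exact eq_of_subset_of_sum_eq hw hRA hRA' hPR hPR' (by omega) (by omega) hsum

theorem card_mul_card_sub_le_choose_succ_mul_card {M : Type*} [AddCancelCommMonoid M] {w : α → M}
    (hw : Set.InjOn w A) {V : Finset M} {𝓕 : Finset (Finset α)}
    (h𝓕 : 𝓕 ⊆ A.powersetCard (k + 1)) (hV : ∀ R ∈ 𝓕, ∑ x ∈ R, w x ∈ V) :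
    #𝓕 * (#A - k) ≤ (#A).choose (k + 1) * #V := by
  refine Nat.le_of_mul_le_mul_right ?_ k.succ_pos
  calc #𝓕 * (#A - k) * (k + 1) = #𝓕 * (k + 1) * (#A - k) := by ring
    _ ≤ (#A).choose k * #V * (#A - k) :=
        Nat.mul_le_mul_right _ (card_mul_succ_le_choose_mul_card hw h𝓕 hV)
    _ = (#A).choose k * (#A - k) * #V := by ring
    _ = (#A).choose (k + 1) * #V * (k + 1) := by rw [← Nat.choose_succ_right_eq]; ring

theorem card_mul_card_le_choose_mul_card {M : Type*} [AddCommGroup M] {w : α → M}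
    (hw : Set.InjOn w A) {V : Finset M} {𝓕 : Finset (Finset α)} (hk : 0 < k) (hkA : k < #A)
    (h𝓕 : 𝓕 ⊆ A.powersetCard k) (hV : ∀ R ∈ 𝓕, ∑ x ∈ R, w x ∈ V) :
    #𝓕 * #A ≤ 2 * (#A).choose k * #V := by
  classical
  obtain ⟨i, rfl⟩ := Nat.exists_eq_add_one.2 hk
  obtain ⟨j, hj⟩ := Nat.exists_eq_add_of_lt hkA
  have hsub : ∀ R ∈ 𝓕, R ⊆ A := fun R hR ↦ (mem_powersetCard.1 (h𝓕 hR)).1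
  have hinj : Set.InjOn (A \ ·) (𝓕 : Set (Finset α)) := fun R hR R' hR' h ↦ by
    rw [← Finset.sdiff_sdiff_eq_self (hsub R hR), ← Finset.sdiff_sdiff_eq_self (hsub R' hR')]
    exact congrArg (A \ ·) h
  have hdown := card_mul_card_sub_le_choose_succ_mul_card hw h𝓕 hV
  have hup : #𝓕 * (#A - j) ≤ (#A).choose (j + 1) * #V := by
    rw [← card_image_of_injOn hinj, ← card_map (Equiv.subLeft (∑ x ∈ A, w x)).toEmbedding (s := V)]
    apply card_mul_card_sub_le_choose_succ_mul_card hw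
    · refine image_subset_iff.2 fun R hR ↦ mem_powersetCard.2 ⟨sdiff_subset, ?_⟩
      have := (mem_powersetCard.1 (h𝓕 hR)).2
      rw [card_sdiff_of_subset (hsub R hR)]
      omega
    · refine forall_mem_image.2 fun R hR ↦ mem_map.2 ⟨_, hV R hR, ?_⟩
      simp [← sum_sdiff (hsub R hR)]
  rw [← Nat.choose_symm_of_eq_add (show #A = i + 1 + (j + 1) by omega)] at hup
  calc #𝓕 * #A ≤ #𝓕 * (#A - i + (#A - j)) := by gcongr; omega
    _ ≤ 2 * (#A).choose (i + 1) * #V := by linarith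

end Packing

section Quotients

/-- The values `s / m` with `m` a positive integer: these are the proportions of the total that a
nonempty `s`-divisor can have. -/
def IsQuotientOf (s : ℕ) (v : ℝ) : Prop :=
  ∃ m : ℕ, 0 < m ∧ v = s / m

namespace IsQuotientOf

variable {s : ℕ} {v d : ℝ}

theorem le_div_add_one (hv : IsQuotientOf s v) (h : v < 1) : v ≤ s / (s + 1) := by
  obtain ⟨m, hm, rfl⟩ := hv
  have hsm : s < m := by
    rwa [div_lt_one (by positivity), Nat.cast_lt] at h
  have : (s : ℝ) + 1 ≤ m := mod_cast hsm
  gcongr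

theorem exists_finset_card_le (s : ℕ) (hd : 0 < d) :
    ∃ V : Finset ℝ, (V.card : ℝ) ≤ s / d ∧ ∀ v, IsQuotientOf s v → d ≤ v → v ∈ V := by
  classical
  refine ⟨(Finset.Icc 1 ⌊s / d⌋₊).image fun m : ℕ ↦ (s / m : ℝ), ?_, ?_⟩
  · calc _ ≤ ((Finset.Icc 1 ⌊s / d⌋₊).card : ℝ) := mod_cast Finset.card_image_le
      _ ≤ s / d := by simpa using Nat.floor_le (by positivity)
  · rintro _ ⟨m, hm, rfl⟩ hdm
    refine Finset.mem_image_of_mem _ (Finset.mem_Icc.2 ⟨hm, Nat.le_floor ?_⟩)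
    rwa [le_div_comm₀ hd (by positivity)] at hdm

theorem exists_mul_mul_add_eq {δ : ℝ} (hv : 0 < v) (hδ : 0 < δ) (hquot : IsQuotientOf s v)
    (hquot' : IsQuotientOf s (v + δ)) : ∃ h : ℕ, 0 < h ∧ h * (v * (v + δ)) = s * δ := by
  obtain ⟨f, hf, hvf⟩ := hquot
  obtain ⟨g, hg, hvg⟩ := hquot'
  have hfv : f * v = s := by rw [hvf]; field_simp
  have hgv : g * (v + δ) = s := by rw [hvg]; field_simp
  have hgf : g < f := by
    have : (g : ℝ) * v < f * v := by nlinarith [show (0 : ℝ) < g from mod_cast hg]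
    exact_mod_cast lt_of_mul_lt_mul_right this hv.le
  refine ⟨f - g, by omega, ?_⟩
  rw [Nat.cast_sub hgf.le]
  linear_combination (v + δ) * hfv - v * hgv

/-- The positive integer `h = s δ / (v (v + δ))` is at most `s δ / d²` and determines `v`. -/
theorem card_le_of_add {Y : Finset ℝ} {δ : ℝ} (hd : 0 < d) (hδ : 0 < δ)
    (hY : ∀ v ∈ Y, d ≤ v ∧ IsQuotientOf s v ∧ IsQuotientOf s (v + δ)) :
    (Y.card : ℝ) ≤ s * δ / d ^ 2 := by
  choose! h hpos heq using fun v hv ↦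
    exists_mul_mul_add_eq (hd.trans_le (hY v hv).1) hδ (hY v hv).2.1 (hY v hv).2.2
  have hinj : Set.InjOn h Y := by
    intro v hv v' hv' hvv'
    have hh : (0 : ℝ) < h v := mod_cast hpos v hv
    have : v * (v + δ) = v' * (v' + δ) :=
      mul_left_cancel₀ hh.ne' ((heq v hv).trans (by rw [hvv', heq v' hv']))
    have hd1 := (hY v hv).1
    have hd2 := (hY v' hv').1
    have hfac : (v - v') * (v + v' + δ) = 0 := by linear_combination this
    rcases mul_eq_zero.1 hfac with h0 | h0 <;> linarith
  have hle : ∀ v ∈ Y, (h v : ℝ) ≤ s * δ / d ^ 2 := by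
    intro v hv
    have hdv := (hY v hv).1
    rw [le_div_iff₀ (by positivity), ← heq v hv]
    gcongr
    nlinarith
  calc (Y.card : ℝ) ≤ ((Finset.Icc 1 ⌊s * δ / d ^ 2⌋₊).card : ℝ) := by
        exact_mod_cast Finset.card_le_card_of_injOn h
          (fun v hv ↦ Finset.mem_Icc.2 ⟨hpos v hv, Nat.le_floor (hle v hv)⟩) hinj
    _ ≤ s * δ / d ^ 2 := by simpa using Nat.floor_le (by positivity)

end IsQuotientOf

open Finset

variable {α : Type*} {A : Finset α} {w : α → ℝ} {s k : ℕ}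

theorem card_mul_card_le_of_isQuotientOf (hw : Set.InjOn w A) (hk : 0 < k) (hkA : k < #A)
    {𝓕 : Finset (Finset α)} (h𝓕 : 𝓕 ⊆ A.powersetCard k) {t d : ℝ} (hd : 0 < d)
    (hle : ∀ R ∈ 𝓕, d ≤ t + ∑ x ∈ R, w x)
    (hquot : ∀ R ∈ 𝓕, IsQuotientOf s (t + ∑ x ∈ R, w x)) :
    (#𝓕 : ℝ) * #A ≤ 2 * (#A).choose k * (s / d) := by
  obtain ⟨V, hVcard, hV⟩ := IsQuotientOf.exists_finset_card_le s hd
  have hpack : #𝓕 * #A ≤ 2 * (#A).choose k * #(V.map (Equiv.addLeft (-t)).toEmbedding) :=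
    card_mul_card_le_choose_mul_card hw hk hkA h𝓕 fun R hR ↦
      mem_map.2 ⟨_, hV _ (hquot R hR) (hle R hR), by simp⟩
  rw [card_map] at hpack
  calc (#𝓕 : ℝ) * #A ≤ 2 * (#A).choose k * #V := mod_cast hpack
    _ ≤ 2 * (#A).choose k * (s / d) := by gcongr

end Quotients

section Averaging

open Finset

variable {α : Type*} {A : Finset α} {w : α → ℝ}

theorem mul_card_le_of_card_filter_notMem_le [DecidableEq α] (hw : ∀ x ∈ A, 0 ≤ w x)
    (hsum : ∑ x ∈ A, w x = 1) {𝓕 : Finset (Finset α)} {η M : ℝ} (h𝓕 : ∀ B ∈ 𝓕, B ⊆ A)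
    (hη : ∀ B ∈ 𝓕, ∑ x ∈ B, w x ≤ 1 - η)
    (hM : ∀ y ∈ A, (#{B ∈ 𝓕 | y ∉ B} : ℝ) ≤ M) : η * #𝓕 ≤ M := by
  calc η * #𝓕 = ∑ _B ∈ 𝓕, η := by rw [sum_const, nsmul_eq_mul, mul_comm]
    _ ≤ ∑ B ∈ 𝓕, ∑ y ∈ A \ B, w y := sum_le_sum fun B hB ↦ by
      have := sum_sdiff (f := w) (h𝓕 B hB)
      linarith [hη B hB]
    _ = ∑ B ∈ 𝓕, ∑ y ∈ A, if y ∉ B then w y else 0 := by simp only [← sum_filter, sdiff_eq_filter]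
    _ = ∑ y ∈ A, w y * #{B ∈ 𝓕 | y ∉ B} := by
      rw [sum_comm]
      simp only [← sum_filter, sum_const, nsmul_eq_mul, mul_comm]
    _ ≤ ∑ y ∈ A, w y * M := sum_le_sum fun y hy ↦ mul_le_mul_of_nonneg_left (hM y hy) (hw y hy)
    _ = M := by rw [← sum_mul, hsum, one_mul]

theorem card_mul_sum_powersetCard_sum (A : Finset α) (w : α → ℝ) (k : ℕ) :
    #A * ∑ B ∈ A.powersetCard k, ∑ x ∈ B, w x = k * (#A).choose k * ∑ x ∈ A, w x := by
  classical
  have hcount : ∀ x ∈ A, #A * #{B ∈ A.powersetCard k | x ∈ B} = k * (#A).choose k := by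
    intro x hx
    obtain ⟨n, hn⟩ := Nat.exists_eq_add_one.2 (card_pos.2 ⟨x, hx⟩)
    obtain _ | k := k
    · simp [filter_singleton]
    · have := card_filter_powersetCard_subset {x} A (k + 1) (by simpa) (by simp)
      simp only [singleton_subset_iff, card_singleton, hn, Nat.add_sub_cancel] at this
      rw [this, hn, Nat.add_one_mul_choose_eq, mul_comm]
  calc _ = ∑ x ∈ A, (#A * #{B ∈ A.powersetCard k | x ∈ B}) * w x := by
        have : ∀ B ∈ A.powersetCard k, ∑ x ∈ B, w x = ∑ x ∈ A, if x ∈ B then w x else 0 := by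
          intro B hB
          rw [← sum_filter, filter_mem_eq_inter, inter_eq_right.2 (mem_powersetCard.1 hB).1]
        rw [sum_congr rfl this, sum_comm, mul_sum]
        simp only [← sum_filter, sum_const, nsmul_eq_mul, mul_assoc]
    _ = ∑ x ∈ A, k * (#A).choose k * w x := sum_congr rfl fun x hx ↦ by
        rw [← Nat.cast_mul, hcount x hx, Nat.cast_mul]
    _ = _ := (mul_sum ..).symm

theorem card_mul_card_filter_sum_lt_le (hw : ∀ x ∈ A, 0 ≤ w x) (hsum : ∑ x ∈ A, w x ≤ 1)
    (k : ℕ) (d : ℝ) :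
    #A * ((1 - d) * #{B ∈ A.powersetCard k | ∑ x ∈ B, w x < d})
      ≤ (#A - k * ∑ x ∈ A, w x) * (#A).choose k := by
  have hupper : ∑ B ∈ A.powersetCard k, ∑ x ∈ B, w x
      ≤ ∑ B ∈ A.powersetCard k, (1 - if ∑ x ∈ B, w x < d then 1 - d else 0) := by
    refine sum_le_sum fun B hB ↦ ?_
    split_ifs with h
    · linarith
    · linarith [sum_le_sum_of_subset_of_nonneg (mem_powersetCard.1 hB).1 fun x hx _ ↦ hw x hx]
  rw [sum_sub_distrib, ← sum_filter, sum_const, sum_const, card_powersetCard, nsmul_one,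
    nsmul_eq_mul] at hupper
  have := card_mul_sum_powersetCard_sum A w k
  nlinarith [mul_le_mul_of_nonneg_left hupper (Nat.cast_nonneg (α := ℝ) #A)]

end Averaging

section DivisorFamily

open Finset

variable {α : Type*} {A : Finset α} {w : α → ℝ} {s k : ℕ}

open Classical in
/-- The `k`-element subsets of `A` whose weight is `s / m` for some positive integer `m`. For
weights proportional to the elements of `A` and of total `1`, these are the `s`-divisors of `A` of
size `k`. -/
noncomputable def divisorFamily (s k : ℕ) (w : α → ℝ) (A : Finset α) : Finset (Finset α) :=
  {B ∈ A.powersetCard k | IsQuotientOf s (∑ x ∈ B, w x)}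

theorem mem_divisorFamily {B : Finset α} :
    B ∈ divisorFamily s k w A ↔ B ∈ A.powersetCard k ∧ IsQuotientOf s (∑ x ∈ B, w x) := by
  classical exact mem_filter

theorem divisorFamily_subset_powersetCard : divisorFamily s k w A ⊆ A.powersetCard k :=
  fun _ hB ↦ (mem_divisorFamily.1 hB).1

theorem sum_le_of_mem_divisorFamily (hpos : ∀ x ∈ A, 0 < w x) (hsum : ∑ x ∈ A, w x = 1)
    (hkA : k < #A) {B : Finset α} (hB : B ∈ divisorFamily s k w A) :
    ∑ x ∈ B, w x ≤ s / (s + 1) := by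
  obtain ⟨hB, hquot⟩ := mem_divisorFamily.1 hB
  obtain ⟨hBA, rfl⟩ := mem_powersetCard.1 hB
  obtain ⟨y, hyA, hyB⟩ := exists_mem_notMem_of_card_lt_card hkA
  refine hquot.le_div_add_one (hsum ▸ sum_lt_sum_of_subset hBA hyA hyB (hpos y hyA) ?_)
  exact fun x hx _ ↦ (hpos x hx).le

end DivisorFamily

section Dense

open Finset

variable {α : Type*} {A : Finset α} {w : α → ℝ} {s k : ℕ} {e : ℝ}

theorem one_div_le_sum_erase [DecidableEq α] {y : α} (hy : y ∈ A) (hsum : ∑ x ∈ A, w x = 1)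
    (hmax : w y ≤ s / (s + 1)) : 1 / (s + 1) ≤ ∑ x ∈ A.erase y, w x := by
  have hs : 1 / ((s : ℝ) + 1) = 1 - s / (s + 1) := by field_simp; ring
  linarith [add_sum_erase A w hy]

theorem one_sub_mul_card_filter_notMem_le [DecidableEq α] (hw : ∀ x ∈ A, 0 ≤ w x)
    (hsum : ∑ x ∈ A, w x ≤ 1) (hA : 1 < #A) {y : α} (hy : y ∈ A)
    (hσ : e * (#A - 1) ≤ k * ∑ x ∈ A.erase y, w x) (d : ℝ) :
    (1 - d) * #{B ∈ {B ∈ A.powersetCard k | ∑ x ∈ B, w x < d} | y ∉ B}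
      ≤ (1 - e) * (#A - 1).choose k := by
  have hA' : (0 : ℝ) < #A - 1 := sub_pos.2 (mod_cast hA)
  have hcard : (#(A.erase y) : ℝ) = #A - 1 := by
    rw [card_erase_of_mem hy, Nat.cast_pred (by omega)]
  have hfilter : {B ∈ {B ∈ A.powersetCard k | ∑ x ∈ B, w x < d} | y ∉ B}
      = {B ∈ (A.erase y).powersetCard k | ∑ x ∈ B, w x < d} := by
    ext B
    simp only [mem_filter, mem_powersetCard, subset_erase]
    tauto
  have hlight := card_mul_card_filter_sum_lt_le (A := A.erase y) (w := w)
    (fun x hx ↦ hw x (mem_of_mem_erase hx)) (by linarith [add_sum_erase A w hy, hw y hy]) k d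
  rw [hcard, ← hfilter, card_erase_of_mem hy] at hlight
  refine le_of_mul_le_mul_left (hlight.trans ?_) hA'
  rw [← mul_assoc]
  gcongr
  linarith

theorem card_filter_sum_lt_le [DecidableEq α] (hw : ∀ x ∈ A, 0 ≤ w x)
    (hsum : ∑ x ∈ A, w x = 1) (hA : 1 < #A) (he1 : e ≤ 1)
    (hσ : ∀ y ∈ A, e * (#A - 1) ≤ k * ∑ x ∈ A.erase y, w x) :
    (#{B ∈ A.powersetCard k | ∑ x ∈ B, w x < e / 4} : ℝ) ≤ (1 - e / 2) * (#A - 1).choose k := by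
  set C : ℝ := (((#A - 1).choose k : ℕ) : ℝ)
  have he : 0 < 1 - e / 4 := by linarith
  have havg := mul_card_le_of_card_filter_notMem_le (η := 1 - e / 4) hw hsum
    (fun B hB ↦ (mem_powersetCard.1 (filter_subset _ _ hB)).1)
    (fun B hB ↦ by linarith [(mem_filter.1 hB).2])
    fun y hy ↦ (le_div_iff₀' he).2
      (one_sub_mul_card_filter_notMem_le hw hsum.le hA hy (hσ y hy) (e / 4))
  have hfactor : 1 - e ≤ (1 - e / 4) ^ 2 * (1 - e / 2) := by nlinarith [sq_nonneg e]
  rw [le_div_iff₀' he] at havg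
  refine le_of_mul_le_mul_left (a := (1 - e / 4) ^ 2) ?_ (by positivity)
  calc _ = _ := by rw [sq, mul_assoc]
    _ ≤ (1 - e) * C := havg
    _ ≤ (1 - e / 4) ^ 2 * (1 - e / 2) * C := by gcongr
    _ = _ := mul_assoc ..

theorem card_divisorFamily_filter_le_sum_le (hw : Set.InjOn w A) (hpos : ∀ x ∈ A, 0 < w x)
    (hsum : ∑ x ∈ A, w x = 1) (hk : 0 < k) (hkA : k + 1 < #A) {d : ℝ} (hd : 0 < d) :
    (#{B ∈ divisorFamily s k w A | d ≤ ∑ x ∈ B, w x} : ℝ)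
      ≤ 2 * (s + 1) * (s / d) / (#A - 1) * (#A - 1).choose k := by
  classical
  set 𝓗 := {B ∈ divisorFamily s k w A | d ≤ ∑ x ∈ B, w x}
  have hA : (0 : ℝ) < #A - 1 := sub_pos.2 (mod_cast (by omega : 1 < #A))
  have hlink : ∀ y ∈ A, (#{B ∈ 𝓗 | y ∉ B} : ℝ) ≤ 2 * (#A - 1).choose k * (s / d) / (#A - 1) := by
    intro y hy
    have hcard : (#(A.erase y) : ℝ) = #A - 1 := by
      rw [card_erase_of_mem hy, Nat.cast_pred (by omega)]
    rw [le_div_iff₀ hA, ← hcard, ← card_erase_of_mem hy]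
    refine card_mul_card_le_of_isQuotientOf (t := 0) (hw.mono (coe_subset.2 (erase_subset y A))) hk
      (by rw [card_erase_of_mem hy]; omega) (fun B hB ↦ ?_) hd ?_ ?_
    · obtain ⟨hB, hyB⟩ := mem_filter.1 hB
      have := mem_powersetCard.1 (divisorFamily_subset_powersetCard (filter_subset _ _ hB))
      exact mem_powersetCard.2 ⟨subset_erase.2 ⟨this.1, hyB⟩, this.2⟩
    all_goals
      intro B hB
      have := mem_filter.1 (mem_filter.1 hB).1
      rw [zero_add]
    · exact this.2
    · exact (mem_divisorFamily.1 this.1).2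
  have havg := mul_card_le_of_card_filter_notMem_le (η := 1 / (s + 1)) (fun x hx ↦ (hpos x hx).le)
    hsum (fun B hB ↦ (mem_powersetCard.1
      (divisorFamily_subset_powersetCard (filter_subset _ _ hB))).1)
    (fun B hB ↦ (sum_le_of_mem_divisorFamily hpos hsum (by omega) (filter_subset _ _ hB)).trans_eq
      (by field_simp; ring)) hlink
  rw [one_div_mul_eq_div, div_le_iff₀ (by positivity)] at havg
  exact havg.trans_eq (by ring)

theorem card_divisorFamily_le_add (d : ℝ) :
    #(divisorFamily s k w A) ≤ #{B ∈ A.powersetCard k | ∑ x ∈ B, w x < d}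
      + #{B ∈ divisorFamily s k w A | d ≤ ∑ x ∈ B, w x} := by
  rw [← card_filter_add_card_filter_not (s := divisorFamily s k w A) (fun B ↦ ∑ x ∈ B, w x < d)]
  simp only [not_lt]
  gcongr
  exact divisorFamily_subset_powersetCard

theorem card_divisorFamily_lt_of_dense (hw : Set.InjOn w A) (hpos : ∀ x ∈ A, 0 < w x)
    (hsum : ∑ x ∈ A, w x = 1) (hmax : ∀ x ∈ A, w x ≤ s / (s + 1)) (he : 0 < e)
    (hek : e * (s + 1) * #A ≤ k) (hkA : k + 1 < #A)
    (hlarge : 16 * s * (s + 1) < e ^ 2 * (#A - 1)) :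
    #(divisorFamily s k w A) < (#A - 1).choose k := by
  classical
  have hA : (0 : ℝ) < #A - 1 := sub_pos.2 (mod_cast (by omega : 1 < #A))
  have hk : 0 < k := by
    have : (0 : ℝ) < e * (s + 1) * #A := mul_pos (by positivity) (by linarith)
    exact_mod_cast this.trans_le hek
  have he1 : e ≤ 1 := by
    have : e * #A ≤ 1 * #A := calc
      e * #A ≤ e * #A * (s + 1) := le_mul_of_one_le_right (by positivity) (by simp)
      _ = e * (s + 1) * #A := by ring
      _ ≤ 1 * #A := hek.trans (by rw [one_mul]; exact_mod_cast (by omega : k ≤ #A))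
    exact le_of_mul_le_mul_right this (by linarith)
  have hσ : ∀ y ∈ A, e * (#A - 1) ≤ k * ∑ x ∈ A.erase y, w x := fun y hy ↦ by
    calc e * (#A - 1) ≤ e * #A := by gcongr; linarith
      _ = e * (s + 1) * #A * (1 / (s + 1)) := by field_simp
      _ ≤ _ := by gcongr; exact one_div_le_sum_erase hy hsum (hmax y hy)
  have hC : (0 : ℝ) < (((#A - 1).choose k : ℕ) : ℝ) := mod_cast Nat.choose_pos (by omega)
  have hlight := card_filter_sum_lt_le (fun x hx ↦ (hpos x hx).le) hsum (by omega) he1 hσ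
  have hheavy :=
    card_divisorFamily_filter_le_sum_le (s := s) hw hpos hsum hk hkA (d := e / 4) (by positivity)
  have hsmall : 2 * (s + 1) * (s / (e / 4)) / ((#A : ℝ) - 1) < e / 2 := by
    rw [div_lt_iff₀ hA]
    field_simp
    linarith
  have : (#(divisorFamily s k w A) : ℝ) < (#A - 1).choose k := calc
    _ ≤ (#{B ∈ A.powersetCard k | ∑ x ∈ B, w x < e / 4} : ℝ)
        + #{B ∈ divisorFamily s k w A | e / 4 ≤ ∑ x ∈ B, w x} :=
      mod_cast card_divisorFamily_le_add (e / 4)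
    _ ≤ _ := add_le_add hlight hheavy
    _ < (1 - e / 2) * (#A - 1).choose k + e / 2 * (#A - 1).choose k := by gcongr
    _ = _ := by ring
  exact_mod_cast this

end Dense

section ThroughElement

open Finset

variable {α : Type*} {A : Finset α} {w : α → ℝ} {s k : ℕ}

theorem nonMemberSubfamily_divisorFamily [DecidableEq α] (z : α) :
    (divisorFamily s k w A).nonMemberSubfamily z = divisorFamily s k w (A.erase z) := by
  ext B
  simp only [mem_nonMemberSubfamily, mem_divisorFamily, mem_powersetCard, subset_erase]
  tauto

theorem mem_memberSubfamily_divisorFamily [DecidableEq α] {z : α} (hz : z ∈ A) {B : Finset α} :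
    B ∈ (divisorFamily s (k + 1) w A).memberSubfamily z ↔
      B ∈ (A.erase z).powersetCard k ∧ IsQuotientOf s (w z + ∑ x ∈ B, w x) := by
  simp only [mem_memberSubfamily, mem_divisorFamily, mem_powersetCard, subset_erase]
  by_cases hzB : z ∈ B
  · simp [hzB]
  · simp [hzB, insert_subset_iff, hz, card_insert_of_notMem, sum_insert]

theorem card_divisorFamily_succ_le [DecidableEq α] {z : α} (hz : z ∈ A) :
    #(divisorFamily s (k + 1) w A)
      ≤ (#A - 1).choose k + #(divisorFamily s (k + 1) w (A.erase z)) := by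
  rw [← card_memberSubfamily_add_card_nonMemberSubfamily z, nonMemberSubfamily_divisorFamily,
    ← card_erase_of_mem hz, ← card_powersetCard]
  gcongr
  exact fun B hB ↦ ((mem_memberSubfamily_divisorFamily hz).1 hB).1

theorem five_mul_card_memberSubfamily_le [DecidableEq α] (hw : Set.InjOn w A)
    (hpos : ∀ x ∈ A, 0 < w x) (hk : 0 < k) (hkA : k + 1 < #A) {z : α} (hz : z ∈ A)
    (hheavy : 10 * s ≤ w z * (#A - 1)) :
    5 * #((divisorFamily s (k + 1) w A).memberSubfamily z) ≤ (#A - 1).choose k := by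
  set 𝓕 := (divisorFamily s (k + 1) w A).memberSubfamily z
  have h𝓕 : ∀ B ∈ 𝓕, _ := fun B hB ↦ (mem_memberSubfamily_divisorFamily hz).1 hB
  have hA : (0 : ℝ) < #A - 1 := sub_pos.2 (mod_cast (by omega : 1 < #A))
  have hwz := hpos z hz
  have hpack := card_mul_card_le_of_isQuotientOf (hw.mono (coe_subset.2 (erase_subset z A))) hk
    (by rw [card_erase_of_mem hz]; omega) (fun B hB ↦ (h𝓕 B hB).1) hwz
    (fun B hB ↦ le_add_of_nonneg_right (sum_nonneg fun x hx ↦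
      (hpos x (mem_of_mem_erase ((mem_powersetCard.1 (h𝓕 B hB).1).1 hx))).le))
    fun B hB ↦ (h𝓕 B hB).2
  rw [card_erase_of_mem hz, Nat.cast_pred (by omega)] at hpack
  have hquot : s / w z ≤ (#A - 1) / 10 := by rw [div_le_div_iff₀ hwz (by norm_num)]; linarith
  have : (5 * #𝓕 : ℝ) ≤ (#A - 1).choose k := by
    refine le_of_mul_le_mul_right ?_ hA
    calc (5 * #𝓕 : ℝ) * (#A - 1) = 5 * (#𝓕 * (#A - 1)) := by ring
      _ ≤ 5 * (2 * (#A - 1).choose k * ((#A - 1) / 10)) := by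
        refine mul_le_mul_of_nonneg_left (hpack.trans ?_) (by norm_num)
        gcongr
      _ = (#A - 1).choose k * (#A - 1) := by ring
  exact_mod_cast this

theorem card_nonMemberSubfamily_nonMemberSubfamily_le [DecidableEq α] {y z : α} (hy : y ∈ A)
    (hz : z ∈ A) (hyz : y ≠ z) :
    #(((divisorFamily s k w A).nonMemberSubfamily z).nonMemberSubfamily y)
      ≤ (#A - 2).choose k := by
  have herase : #((A.erase z).erase y) = #A - 2 := by
    rw [card_erase_of_mem (mem_erase.2 ⟨hyz, hy⟩), card_erase_of_mem hz, Nat.sub_sub]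
  rw [nonMemberSubfamily_divisorFamily, nonMemberSubfamily_divisorFamily, ← herase,
    ← card_powersetCard]
  exact card_le_card divisorFamily_subset_powersetCard

theorem card_le_card_memberSubfamily_add [DecidableEq α] (𝓕 : Finset (Finset α)) (y z : α) :
    #𝓕 ≤ #(𝓕.memberSubfamily z) + #(𝓕.memberSubfamily y)
      + #((𝓕.nonMemberSubfamily z).nonMemberSubfamily y) := by
  have : #((𝓕.nonMemberSubfamily z).memberSubfamily y) ≤ #(𝓕.memberSubfamily y) :=
    card_le_card fun B hB ↦ by
      simp only [mem_memberSubfamily, mem_nonMemberSubfamily] at hB ⊢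
      exact ⟨hB.1.1, hB.2⟩
  rw [← card_memberSubfamily_add_card_nonMemberSubfamily z 𝓕,
    ← card_memberSubfamily_add_card_nonMemberSubfamily y (𝓕.nonMemberSubfamily z)]
  omega

theorem card_divisorFamily_lt_of_two_heavy (hw : Set.InjOn w A) (hpos : ∀ x ∈ A, 0 < w x)
    (hk : 0 < k) (hkA : 2 * (k + 1) ≤ #A) {y z : α} (hy : y ∈ A) (hz : z ∈ A) (hyz : y ≠ z)
    (hheavy_y : 10 * s ≤ w y * (#A - 1)) (hheavy_z : 10 * s ≤ w z * (#A - 1)) :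
    #(divisorFamily s (k + 1) w A) < (#A - 1).choose (k + 1) := by
  classical
  obtain ⟨n, hn⟩ : ∃ n, #A = n + 2 := Nat.exists_eq_add_of_le' (by omega)
  obtain ⟨j, rfl⟩ := Nat.exists_eq_add_one.2 hk
  have hsplit := card_le_card_memberSubfamily_add (divisorFamily s (j + 1 + 1) w A) y z
  have hthrough_z := five_mul_card_memberSubfamily_le hw hpos hk (by omega) hz hheavy_z
  have hthrough_y := five_mul_card_memberSubfamily_le hw hpos hk (by omega) hy hheavy_y
  have havoid := card_nonMemberSubfamily_nonMemberSubfamily_le (s := s) (k := j + 1 + 1) (w := w)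
    hy hz hyz
  have hmono : n.choose j ≤ n.choose (j + 1) := Nat.choose_le_succ_of_lt_half_left (by omega)
  have hchoose : 0 < n.choose (j + 1) := Nat.choose_pos (by omega)
  have hpascal := Nat.choose_succ_succ' n j
  have hpascal' := Nat.choose_succ_succ' n (j + 1)
  rw [show #A - 1 = n + 1 by omega] at *
  rw [show #A - 2 = n by omega] at havoid
  omega

end ThroughElement

section Extenders

open Finset

variable {α : Type*} [DecidableEq α] {E : Finset α} {k : ℕ}

/-- The elements of `E` that extend the set `P` to a member of the family `𝓠`; their number is the
degree of `P` in `𝓠`. -/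
def extenders (𝓠 : Finset (Finset α)) (E P : Finset α) : Finset α :=
  {x ∈ E \ P | insert x P ∈ 𝓠}

theorem card_extenders {𝓠 : Finset (Finset α)} (h𝓠 : 𝓠 ⊆ E.powersetCard (k + 1)) {P : Finset α}
    (hP : #P = k) : #(extenders 𝓠 E P) = #{R ∈ 𝓠 | P ⊆ R} := by
  refine card_bij (fun x _ ↦ insert x P) ?_ ?_ ?_
  · intro x hx
    exact mem_filter.2 ⟨(mem_filter.1 hx).2, subset_insert x P⟩
  · intro x hx y _ hxy
    exact (insert_inj (mem_sdiff.1 (mem_filter.1 hx).1).2).1 hxy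
  · intro R hR
    obtain ⟨hR, hPR⟩ := mem_filter.1 hR
    obtain ⟨hRE, hRcard⟩ := mem_powersetCard.1 (h𝓠 hR)
    obtain ⟨x, hxP, rfl⟩ := exists_eq_insert_iff.2 ⟨hPR, by omega⟩
    exact ⟨x, mem_filter.2 ⟨mem_sdiff.2 ⟨hRE (mem_insert_self x P), hxP⟩, hR⟩, rfl⟩

theorem sum_card_extenders {𝓠 : Finset (Finset α)} (h𝓠 : 𝓠 ⊆ E.powersetCard (k + 1)) :
    ∑ P ∈ E.powersetCard k, #(extenders 𝓠 E P) = (k + 1) * #𝓠 := by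
  calc _ = ∑ P ∈ E.powersetCard k, #{R ∈ 𝓠 | P ⊆ R} :=
        sum_congr rfl fun P hP ↦ card_extenders h𝓠 (mem_powersetCard.1 hP).2
    _ = ∑ R ∈ 𝓠, #{P ∈ E.powersetCard k | P ⊆ R} :=
        sum_card_bipartiteAbove_eq_sum_card_bipartiteBelow _
    _ = ∑ R ∈ 𝓠, (k + 1) := sum_congr rfl fun R hR ↦ by
        obtain ⟨hRE, hRcard⟩ := mem_powersetCard.1 (h𝓠 hR)
        have : {P ∈ E.powersetCard k | P ⊆ R} = R.powersetCard k := by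
          ext P
          simp only [mem_filter, mem_powersetCard]
          exact ⟨fun h ↦ ⟨h.2, h.1.2⟩, fun h ↦ ⟨⟨h.1.trans hRE, h.2⟩, h.1⟩⟩
        rw [this, card_powersetCard, hRcard, Nat.choose_succ_self_right]
    _ = (k + 1) * #𝓠 := by rw [sum_const, smul_eq_mul, mul_comm]

theorem four_mul_card_filter_card_extenders_le {𝓑 : Finset (Finset α)}
    (h𝓑 : 𝓑 ⊆ E.powersetCard (k + 1)) (hcard : #𝓑 ≤ (#E).choose k) :
    4 * #{Q ∈ E.powersetCard k | 4 * (k + 1) < #(extenders 𝓑 E Q)} ≤ (#E).choose k := by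
  refine Nat.le_of_mul_le_mul_left ?_ k.succ_pos
  calc (k + 1) * (4 * #{Q ∈ E.powersetCard k | 4 * (k + 1) < #(extenders 𝓑 E Q)})
      = #{Q ∈ E.powersetCard k | 4 * (k + 1) < #(extenders 𝓑 E Q)} • (4 * (k + 1)) := by
        rw [smul_eq_mul]; ring
    _ ≤ ∑ Q ∈ E.powersetCard k with 4 * (k + 1) < #(extenders 𝓑 E Q), #(extenders 𝓑 E Q) :=
        card_nsmul_le_sum _ _ _ fun Q hQ ↦ (mem_filter.1 hQ).2.le
    _ ≤ ∑ Q ∈ E.powersetCard k, #(extenders 𝓑 E Q) := sum_le_sum_of_subset (filter_subset _ _)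
    _ = (k + 1) * #𝓑 := sum_card_extenders h𝓑
    _ ≤ (k + 1) * (#E).choose k := by gcongr

theorem exists_choose_mul_card_extenders_le {𝓠 : Finset (Finset α)}
    (h𝓠 : 𝓠 ⊆ E.powersetCard (k + 1)) (hk : k ≤ #E) :
    ∃ P ∈ E.powersetCard k, (#E).choose k * #(extenders 𝓠 E P) ≤ (k + 1) * #𝓠 := by
  refine exists_le_of_sum_le (powersetCard_nonempty.2 hk) ?_
  rw [← mul_sum, sum_card_extenders h𝓠, sum_const, card_powersetCard, smul_eq_mul]

theorem exists_three_mul_le_card_filter_card_extenders_le {𝓑 : Finset (Finset α)}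
    (h𝓑 : 𝓑 ⊆ E.powersetCard (k + 2)) (hcard : #𝓑 ≤ (#E).choose (k + 1)) (hk : k ≤ #E) :
    ∃ P ∈ E.powersetCard k,
      3 * (#E - k) ≤ 4 * #{x ∈ E \ P | #(extenders 𝓑 E (insert x P)) ≤ 4 * (k + 2)} := by
  set 𝓠 := {Q ∈ E.powersetCard (k + 1) | 4 * (k + 2) < #(extenders 𝓑 E Q)}
  have h𝓠 : 4 * #𝓠 ≤ (#E).choose (k + 1) := four_mul_card_filter_card_extenders_le h𝓑 hcard
  have h𝓠sub : 𝓠 ⊆ E.powersetCard (k + 1) := filter_subset _ _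
  obtain ⟨P, hP, hPle⟩ := exists_choose_mul_card_extenders_le h𝓠sub hk
  obtain ⟨hPE, hPcard⟩ := mem_powersetCard.1 hP
  have hext : 4 * #(extenders 𝓠 E P) ≤ #E - k := by
    refine Nat.le_of_mul_le_mul_left ?_ (Nat.choose_pos hk)
    calc (#E).choose k * (4 * #(extenders 𝓠 E P)) ≤ 4 * ((k + 1) * #𝓠) := by linarith
      _ ≤ (k + 1) * (#E).choose (k + 1) := by nlinarith
      _ = (#E).choose k * (#E - k) := by rw [mul_comm, Nat.choose_succ_right_eq]
  have hnot : {x ∈ E \ P | ¬#(extenders 𝓑 E (insert x P)) ≤ 4 * (k + 2)} ⊆ extenders 𝓠 E P := by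
    intro x hx
    obtain ⟨hxEP, hx⟩ := mem_filter.1 hx
    obtain ⟨hxE, hxP⟩ := mem_sdiff.1 hxEP
    refine mem_filter.2 ⟨hxEP, mem_filter.2 ⟨mem_powersetCard.2 ⟨?_, ?_⟩, not_le.1 hx⟩⟩
    · exact insert_subset hxE hPE
    · rw [card_insert_of_notMem hxP, hPcard]
  have hsplit := card_filter_add_card_filter_not (s := E \ P)
    (fun x ↦ #(extenders 𝓑 E (insert x P)) ≤ 4 * (k + 2))
  rw [card_sdiff_of_subset hPE, hPcard] at hsplit
  have := card_le_card hnot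
  exact ⟨P, hP, by omega⟩

end Extenders

section Sparse

open Finset

variable {α : Type*} {E : Finset α} {w : α → ℝ} {s k : ℕ} {L : ℝ}

theorem exists_ne_card_sub_one_mul_sub_lt {X : Finset α} (hX : 1 < #X)
    (hw : ∀ x ∈ X, 0 ≤ w x ∧ w x < L) :
    ∃ x ∈ X, ∃ x' ∈ X, x ≠ x' ∧ w x ≤ w x' ∧ (#X - 1) * (w x' - w x) < L := by
  obtain ⟨x₀, hx₀⟩ := card_pos.1 (zero_lt_one.trans hX)
  have hL : 0 < L := (hw x₀ hx₀).1.trans_lt (hw x₀ hx₀).2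
  have hm : (0 : ℝ) < #X - 1 := sub_pos.2 (mod_cast hX)
  have hmaps : ∀ x ∈ X, ⌊(#X - 1) * w x / L⌋ ∈ Ico (0 : ℤ) (#X - 1) := by
    intro x hx
    obtain ⟨h0, hlt⟩ := hw x hx
    refine mem_Ico.2 ⟨Int.floor_nonneg.2 (by positivity), Int.floor_lt.2 ?_⟩
    push_cast
    rw [div_lt_iff₀ hL]
    gcongr
  obtain ⟨x, hx, x', hx', hne, heq⟩ :=
    exists_ne_map_eq_of_card_lt_of_maps_to (by rw [Int.card_Ico]; omega) hmaps
  wlog hle : w x ≤ w x' generalizing x x'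
  · exact this x' hx' x hx hne.symm heq.symm (le_of_not_ge hle)
  refine ⟨x, hx, x', hx', hne, hle, ?_⟩
  have := (abs_lt.1 (Int.abs_sub_lt_one_of_floor_eq_floor heq.symm)).2
  rw [← sub_div, div_lt_one hL] at this
  linarith

theorem sum_le_mul_card_filter_add_mul_card {d : ℝ} (hw : ∀ x ∈ E, w x ≤ L) (hd : 0 ≤ d) :
    ∑ x ∈ E, w x ≤ L * #{x ∈ E | d ≤ w x} + d * #E := by
  rw [← sum_filter_add_sum_filter_not E (fun x ↦ d ≤ w x) w]
  refine add_le_add ?_ ?_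
  · rw [mul_comm, ← nsmul_eq_mul]
    exact sum_le_card_nsmul _ _ _ fun x hx ↦ hw x (mem_of_mem_filter x hx)
  · calc _ ≤ #{x ∈ E | ¬d ≤ w x} • d :=
          sum_le_card_nsmul _ _ _ fun x hx ↦ (not_le.1 (mem_filter.1 hx).2).le
      _ ≤ #E • d := by gcongr; exact filter_subset _ _
      _ = d * #E := by rw [nsmul_eq_mul, mul_comm]

theorem card_le_of_isQuotientOf_add {Y : Finset α} {u δ d : ℝ} (hw : Set.InjOn w Y) (hd : 0 < d)
    (hδ : 0 < δ) (hu : 0 ≤ u) (hY : ∀ y ∈ Y, d ≤ w y ∧ IsQuotientOf s (u + w y) ∧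
      IsQuotientOf s (u + δ + w y)) : (#Y : ℝ) ≤ s * δ / d ^ 2 := by
  rw [← card_image_of_injOn (f := fun y ↦ u + w y) fun y hy y' hy' h ↦
    hw hy hy' (add_left_cancel h)]
  refine IsQuotientOf.card_le_of_add hd hδ (forall_mem_image.2 fun y hy ↦ ?_)
  obtain ⟨hdy, hquot, hquot'⟩ := hY y hy
  exact ⟨by linarith, hquot, by rwa [add_right_comm]⟩

variable [DecidableEq α]

theorem exists_close_pair_card_extenders_le {𝓑 : Finset (Finset α)} (hw : Set.InjOn w E)
    (hwL : ∀ x ∈ E, 0 ≤ w x ∧ w x < L) (h𝓑 : 𝓑 ⊆ E.powersetCard (k + 2))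
    (hcard : #𝓑 ≤ (#E).choose (k + 1)) (hk : 3 * k + 4 < 2 * #E) :
    ∃ P ∈ E.powersetCard k, ∃ x ∈ E \ P, ∃ x' ∈ E \ P, w x < w x' ∧ #E * (w x' - w x) ≤ 4 * L ∧
      #(extenders 𝓑 E (insert x P)) ≤ 4 * (k + 2) ∧
      #(extenders 𝓑 E (insert x' P)) ≤ 4 * (k + 2) := by
  obtain ⟨P, hP, hXcard⟩ :=
    exists_three_mul_le_card_filter_card_extenders_le h𝓑 hcard (by omega)
  set X := {x ∈ E \ P | #(extenders 𝓑 E (insert x P)) ≤ 4 * (k + 2)}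
  have hXE : ∀ x ∈ X, x ∈ E := fun x hx ↦ (mem_sdiff.1 (mem_of_mem_filter x hx)).1
  obtain ⟨x, hx, x', hx', hne, hle, hlt⟩ :=
    exists_ne_card_sub_one_mul_sub_lt (X := X) (by omega) fun x hx ↦ hwL x (hXE x hx)
  refine ⟨P, hP, x, mem_of_mem_filter x hx, x', mem_of_mem_filter x' hx',
    hle.lt_of_ne fun h ↦ hne (hw (hXE x hx) (hXE x' hx') h), ?_, (mem_filter.1 hx).2,
    (mem_filter.1 hx').2⟩
  have hcardX : (#E : ℝ) ≤ 4 * (#X - 1) := by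
    have : (#E + 4 : ℝ) ≤ 4 * #X := mod_cast (by omega : #E + 4 ≤ 4 * #X)
    linarith
  nlinarith

/-- The `k`-element subsets of `E` that are not in `divisorFamily s k w E`. -/
noncomputable def nonDivisorFamily (s k : ℕ) (w : α → ℝ) (E : Finset α) : Finset (Finset α) :=
  E.powersetCard k \ divisorFamily s k w E

theorem isQuotientOf_of_notMem_extenders {Q : Finset α} (hQ : Q ∈ E.powersetCard k) {y : α}
    (hyE : y ∈ E) (hyQ : y ∉ Q)
    (hy : y ∉ extenders (nonDivisorFamily s (k + 1) w E) E Q) :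
    IsQuotientOf s (∑ x ∈ Q, w x + w y) := by
  obtain ⟨hQE, hQcard⟩ := mem_powersetCard.1 hQ
  have hmem : insert y Q ∈ E.powersetCard (k + 1) :=
    mem_powersetCard.2 ⟨insert_subset hyE hQE, by rw [card_insert_of_notMem hyQ, hQcard]⟩
  have : insert y Q ∈ divisorFamily s (k + 1) w E := by
    by_contra hnot
    exact hy (mem_filter.2 ⟨mem_sdiff.2 ⟨hyE, hyQ⟩, mem_sdiff.2 ⟨hmem, hnot⟩⟩)
  rw [add_comm, ← sum_insert hyQ]
  exact (mem_divisorFamily.1 this).2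

theorem card_filter_le_of_card_extenders (hw : Set.InjOn w E) (hpos : ∀ x ∈ E, 0 < w x)
    {P : Finset α} (hP : P ∈ E.powersetCard k) {x x' : α} (hx : x ∈ E \ P) (hx' : x' ∈ E \ P)
    (hlt : w x < w x') {d : ℝ} (hd : 0 < d) :
    (#{y ∈ E | d ≤ w y} : ℝ) ≤ s * (w x' - w x) / d ^ 2
      + (#(extenders (nonDivisorFamily s (k + 2) w E) E (insert x P))
        + #(extenders (nonDivisorFamily s (k + 2) w E) E (insert x' P)) + 2 * (k + 1)) := by
  set 𝓑 := nonDivisorFamily s (k + 2) w E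
  obtain ⟨hPE, hPcard⟩ := mem_powersetCard.1 hP
  obtain ⟨⟨hxE, hxP⟩, hxE', hxP'⟩ := mem_sdiff.1 hx, mem_sdiff.1 hx'
  have hinsert : ∀ x ∈ E, x ∉ P → insert x P ∈ E.powersetCard (k + 1) := fun x hx hxP ↦
    mem_powersetCard.2 ⟨insert_subset hx hPE, by rw [card_insert_of_notMem hxP, hPcard]⟩
  set H := {y ∈ E | d ≤ w y}
  set Z := (insert x P ∪ insert x' P) ∪ (extenders 𝓑 E (insert x P) ∪ extenders 𝓑 E (insert x' P))
  have hZ : #Z ≤ #(extenders 𝓑 E (insert x P)) + #(extenders 𝓑 E (insert x' P)) + 2 * (k + 1) := by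
    grw [card_union_le, card_union_le, card_union_le, (mem_powersetCard.1 (hinsert x hxE hxP)).2,
      (mem_powersetCard.1 (hinsert x' hxE' hxP')).2]
    omega
  have hHZ : #H ≤ #(H \ Z) + #Z := by
    rw [← tsub_le_iff_right]
    exact le_card_sdiff Z H
  have hY : (#(H \ Z) : ℝ) ≤ s * (w x' - w x) / d ^ 2 := by
    refine card_le_of_isQuotientOf_add (u := ∑ i ∈ insert x P, w i)
      (hw.mono (coe_subset.2 (sdiff_subset.trans (filter_subset _ _)))) hd (sub_pos.2 hlt)
      (sum_nonneg fun i hi ↦ (hpos i (insert_subset hxE hPE hi)).le) fun y hy ↦ ?_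
    obtain ⟨hyH, hyZ⟩ := mem_sdiff.1 hy
    obtain ⟨hyE, hyd⟩ := mem_filter.1 hyH
    simp only [Z, mem_union, not_or] at hyZ
    have hquot := isQuotientOf_of_notMem_extenders (hinsert x hxE hxP) hyE hyZ.1.1 hyZ.2.1
    have hquot' := isQuotientOf_of_notMem_extenders (hinsert x' hxE' hxP') hyE hyZ.1.2 hyZ.2.2
    have hshift : ∑ i ∈ insert x P, w i + (w x' - w x) = ∑ i ∈ insert x' P, w i := by
      rw [sum_insert hxP, sum_insert hxP']
      ring
    exact ⟨hyd, hquot, by rwa [hshift]⟩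
  have : (#H : ℝ) ≤ #(H \ Z) + #Z := mod_cast hHZ
  have : (#Z : ℝ) ≤ #(extenders 𝓑 E (insert x P)) + #(extenders 𝓑 E (insert x' P)) + 2 * (k + 1) :=
    mod_cast hZ
  linarith

theorem choose_lt_card_nonDivisorFamily (hs : 0 < s) (hw : Set.InjOn w E)
    (hpos : ∀ x ∈ E, 0 < w x) (hlight : ∀ x ∈ E, w x * #E < 10 * s)
    (hsum : 1 / (s + 1) ≤ ∑ x ∈ E, w x)
    (hlarge : 20 * (s * (s + 1)) * (160 * (s * (s + 1)) ^ 2 + 10 * (k + 2)) < #E) :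
    (#E).choose (k + 1) < #(nonDivisorFamily s (k + 2) w E) := by
  by_contra! hcard
  have hk : 10 * (k + 2) < #E := by nlinarith [Nat.mul_pos hs s.succ_pos]
  have hN : (0 : ℝ) < #E := mod_cast (by omega : 0 < #E)
  have hwL : ∀ x ∈ E, w x < 10 * s / #E := fun x hx ↦ (lt_div_iff₀ hN).2 (hlight x hx)
  obtain ⟨P, hP, x, hx, x', hx', hlt, hclose, hext, hext'⟩ :=
    exists_close_pair_card_extenders_le hw (fun x hx ↦ ⟨(hpos x hx).le, hwL x hx⟩)
      sdiff_subset hcard (by omega)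
  set d : ℝ := 1 / (2 * (s + 1) * #E) with hd
  have hupper : (#{y ∈ E | d ≤ w y} : ℝ) ≤ 160 * (s * (s + 1)) ^ 2 + 10 * (k + 2) := by
    have hgap : s * (w x' - w x) / d ^ 2 ≤ 160 * (s * (s + 1)) ^ 2 := by
      rw [hd]
      field_simp at hclose ⊢
      linarith
    have := card_filter_le_of_card_extenders (s := s) hw hpos hP hx hx' hlt (by positivity : 0 < d)
    have : (#(extenders (nonDivisorFamily s (k + 2) w E) E (insert x P)) : ℝ)
      ≤ 4 * (k + 2) := mod_cast hext
    have : (#(extenders (nonDivisorFamily s (k + 2) w E) E (insert x' P)) : ℝ)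
      ≤ 4 * (k + 2) := mod_cast hext'
    linarith
  have hlower : (#E : ℝ) ≤ 20 * (s * (s + 1)) * #{y ∈ E | d ≤ w y} := by
    have := hsum.trans (sum_le_mul_card_filter_add_mul_card (fun x hx ↦ (hwL x hx).le)
      (by positivity : 0 ≤ d))
    have hdE : d * #E = 1 / (2 * (s + 1)) := by rw [hd]; field_simp
    rw [hdE] at this
    generalize (#{y ∈ E | d ≤ w y} : ℝ) = h at *
    field_simp at this
    linarith
  have hlarge' : (20 * (s * (s + 1)) * (160 * (s * (s + 1)) ^ 2 + 10 * (k + 2)) : ℝ) < #E :=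
    mod_cast hlarge
  exact absurd (hlower.trans (by gcongr)) hlarge'.not_ge

theorem card_divisorFamily_lt_of_sparse {A : Finset α} (hs : 0 < s) (hw : Set.InjOn w A)
    (hpos : ∀ x ∈ A, 0 < w x) (hsum : ∑ x ∈ A, w x = 1) {z : α} (hz : z ∈ A)
    (hmax : w z ≤ s / (s + 1)) (hlight : ∀ x ∈ A.erase z, w x * (#A - 1) < 10 * s)
    (hlarge : 20 * (s * (s + 1)) * (160 * (s * (s + 1)) ^ 2 + 10 * (k + 2)) < #A - 1) :
    #(divisorFamily s (k + 2) w A) < (#A - 1).choose (k + 2) := by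
  have hE : #(A.erase z) = #A - 1 := card_erase_of_mem hz
  have hbad := choose_lt_card_nonDivisorFamily (E := A.erase z) hs
    (hw.mono (coe_subset.2 (erase_subset z A))) (fun x hx ↦ hpos x (mem_of_mem_erase hx))
    (by rwa [hE, Nat.cast_pred (by omega)]) (one_div_le_sum_erase hz hsum hmax) (hE ▸ hlarge)
  rw [nonDivisorFamily, card_sdiff_of_subset divisorFamily_subset_powersetCard, card_powersetCard,
    hE] at hbad
  have : #(divisorFamily s (k + 2) w A)
      ≤ (#A - 1).choose (k + 1) + #(divisorFamily s (k + 2) w (A.erase z)) :=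
    card_divisorFamily_succ_le hz
  omega

end Sparse

section Main

open Finset

variable {α : Type*} {A : Finset α} {w : α → ℝ} {s k : ℕ}

/-- A size beyond which the counting arguments for dense and for sparse `k` cover all `k`. -/
def sizeThreshold (s : ℕ) : ℕ :=
  16 * 400 ^ 2 * (s * (s + 1)) ^ 3 * (s + 1) ^ 2 + 2

theorem card_divisorFamily_lt_of_lt_card (hs : 0 < s) (hw : Set.InjOn w A)
    (hpos : ∀ x ∈ A, 0 < w x) (hsum : ∑ x ∈ A, w x = 1) (hmax : ∀ x ∈ A, w x ≤ s / (s + 1))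
    (hlarge : 20 * (s * (s + 1)) * (160 * (s * (s + 1)) ^ 2 + 10 * (k + 2)) < #A - 1) :
    #(divisorFamily s (k + 2) w A) < (#A - 1).choose (k + 2) := by
  classical
  by_cases hheavy : ∃ y ∈ A, ∃ z ∈ A, y ≠ z ∧ 10 * s ≤ w y * (#A - 1) ∧ 10 * s ≤ w z * (#A - 1)
  · obtain ⟨y, hy, z, hz, hyz, hheavy_y, hheavy_z⟩ := hheavy
    have hkA : 2 * (k + 2) ≤ #A := by nlinarith [Nat.mul_pos hs s.succ_pos, Nat.sub_le #A 1]
    exact card_divisorFamily_lt_of_two_heavy hw hpos k.succ_pos hkA hy hz hyz hheavy_y hheavy_z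
  · push Not at hheavy
    obtain ⟨z, hz, hz_max⟩ := exists_max_image A w (card_pos.1 (by omega))
    refine card_divisorFamily_lt_of_sparse hs hw hpos hsum hz (hmax z hz) (fun x hx ↦ ?_) hlarge
    obtain ⟨hxz, hxA⟩ := mem_erase.1 hx
    by_contra! hheavy_x
    have hA : (0 : ℝ) ≤ #A - 1 := sub_nonneg.2 (mod_cast (by omega : 1 ≤ #A))
    exact (hheavy x hxA z hz hxz hheavy_x).not_ge
      (hheavy_x.trans (mul_le_mul_of_nonneg_right (hz_max x hxA) hA))

theorem card_divisorFamily_lt (hs : 0 < s) (hA : sizeThreshold s ≤ #A) (hk : 1 < k)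
    (hkA : k + 1 < #A) (hw : Set.InjOn w A) (hpos : ∀ x ∈ A, 0 < w x) (hsum : ∑ x ∈ A, w x = 1)
    (hmax : ∀ x ∈ A, w x ≤ s / (s + 1)) :
    #(divisorFamily s k w A) < (#A - 1).choose k := by
  obtain ⟨k, rfl⟩ := Nat.exists_eq_add_of_le' hk
  by_cases hlarge : 20 * (s * (s + 1)) * (160 * (s * (s + 1)) ^ 2 + 10 * (k + 2)) < #A - 1
  · exact card_divisorFamily_lt_of_lt_card hs hw hpos hsum hmax hlarge
  have hA' : (16 * 400 ^ 2 * (s * (s + 1)) ^ 3 * (s + 1) ^ 2 + 2 : ℝ) ≤ #A := mod_cast hA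
  have hs' : (0 : ℝ) < s := mod_cast hs
  refine card_divisorFamily_lt_of_dense (e := 1 / (400 * (s * (s + 1)) * (s + 1))) hw hpos hsum hmax
    (by positivity) ?_ hkA ?_
  · have hlarge' : (#A : ℝ) ≤ 20 * (s * (s + 1)) * (160 * (s * (s + 1)) ^ 2 + 10 * (k + 2)) + 1 :=
      mod_cast (by omega)
    have : (#A : ℝ) ≤ 400 * (s * (s + 1)) * (k + 2) := by
      have : (s * (s + 1) : ℝ) ^ 3 ≤ (s * (s + 1)) ^ 3 * (s + 1) ^ 2 :=
        le_mul_of_one_le_right (by positivity) (one_le_pow₀ (by linarith))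
      nlinarith
    push_cast
    field_simp
    linarith
  · field_simp
    linarith

theorem divisorFamily_eq_powersetCard_erase [DecidableEq α] (hpos : ∀ x ∈ A, 0 < w x)
    (hsum : ∑ x ∈ A, w x = 1) (hkA : k < #A) {z : α} (hz : z ∈ A) (hheavy : s / (s + 1) < w z)
    (hcard : (#A - 1).choose k ≤ #(divisorFamily s k w A)) :
    divisorFamily s k w A = (A.erase z).powersetCard k := by
  refine eq_of_subset_of_card_le (fun B hB ↦ ?_)
    (by rwa [card_powersetCard, card_erase_of_mem hz])
  obtain ⟨hBA, hBcard⟩ := mem_powersetCard.1 (divisorFamily_subset_powersetCard hB)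
  refine mem_powersetCard.2 ⟨subset_erase.2 ⟨hBA, fun hzB ↦ ?_⟩, hBcard⟩
  have : w z ≤ ∑ x ∈ B, w x := single_le_sum (fun x hx ↦ (hpos x (hBA hx)).le) hzB
  exact (hheavy.trans_le this).not_ge (sum_le_of_mem_divisorFamily hpos hsum hkA hB)

/-- The proportion of the total of `A` carried by the integer `x`. -/
noncomputable def relativeWeight (A : Finset ℕ) (x : ℕ) : ℝ :=
  x / (A.sum id : ℕ)

theorem relativeWeight_strictMono {A : Finset ℕ} (hA : 0 < A.sum id) :
    StrictMono (relativeWeight A) := fun _ _ hxy ↦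
  div_lt_div_of_pos_right (mod_cast hxy) (mod_cast hA)

theorem sum_relativeWeight (A B : Finset ℕ) :
    ∑ x ∈ B, relativeWeight A x = (B.sum id : ℕ) / (A.sum id : ℕ) := by
  simp only [relativeWeight, ← sum_div, id, Nat.cast_sum]

theorem dvd_mul_sum_iff_isQuotientOf {A B : Finset ℕ} (hs : 0 < s) (hA : 0 < A.sum id) :
    B.sum id ∣ s * A.sum id ↔ IsQuotientOf s (∑ x ∈ B, relativeWeight A x) := by
  have hA' : ((A.sum id : ℕ) : ℝ) ≠ 0 := mod_cast hA.ne'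
  have hcast (m : ℕ) (hm : 0 < m) :
      ((B.sum id : ℕ) / (A.sum id : ℕ) : ℝ) = s / m ↔ s * A.sum id = B.sum id * m := by
    rw [div_eq_div_iff hA' (by positivity), eq_comm]
    norm_cast
  rw [sum_relativeWeight]
  refine ⟨fun ⟨m, hm⟩ ↦ ?_, fun ⟨m, hm, h⟩ ↦ ⟨m, (hcast m hm).1 h⟩⟩
  have hm0 : 0 < m := Nat.pos_of_ne_zero fun h ↦ (Nat.mul_pos hs hA).ne' (by rw [hm, h, mul_zero])
  exact ⟨m, hm0, (hcast m hm0).2 hm⟩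

theorem filter_dvd_eq_divisorFamily {A : Finset ℕ} (hs : 0 < s) (hA : 0 < A.sum id) (k : ℕ) :
    {B ∈ A.powersetCard k | B.sum id ∣ s * A.sum id} = divisorFamily s k (relativeWeight A) A := by
  ext B
  rw [mem_filter, mem_divisorFamily, dvd_mul_sum_iff_isQuotientOf hs hA]

theorem isAntiPencil_of_choose_le_dsk {A : Finset ℕ} (hs : 0 < s) (hA : sizeThreshold s ≤ #A)
    (hpos : ∀ a ∈ A, 0 < a) (hk : 1 < k) (hkA : k + 1 < #A)
    (hcard : (#A - 1).choose k ≤ dsk s k A) : IsAntiPencil s k A := by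
  have hne : A.Nonempty := card_pos.1 (by omega)
  have htotal : 0 < A.sum id := sum_pos hpos hne
  have hmono := relativeWeight_strictMono htotal
  have hwpos : ∀ x ∈ A, 0 < relativeWeight A x := fun x hx ↦
    div_pos (mod_cast hpos x hx) (mod_cast htotal)
  have hwsum : ∑ x ∈ A, relativeWeight A x = 1 := by
    rw [sum_relativeWeight, div_self (mod_cast htotal.ne')]
  have hfilter := filter_dvd_eq_divisorFamily hs htotal k
  rw [dsk, hfilter] at hcard
  have hheavy : s / (s + 1) < relativeWeight A (A.max' hne) := by
    by_contra! hmax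
    exact (card_divisorFamily_lt hs hA hk hkA hmono.injective.injOn hwpos hwsum
      fun x hx ↦ (hmono.monotone (A.le_max' x hx)).trans hmax).not_ge hcard
  exact ⟨hne, hfilter.trans (divisorFamily_eq_powersetCard_erase hwpos hwsum (by omega)
    (A.max'_mem hne) hheavy hcard)⟩

end Main

/-- **Theorem 4.** Fix `s ≥ 1`. For all but finitely many pairs `(k, n)` with
`1 < k < n - 1`, any set `A` of `n` positive integers with `d^s_k(A) ≥ C(n-1, k)` is a
`(k, s)`-anti-pencil. -/
theorem zbarsky_general_case (s : ℕ) (hs : 1 ≤ s) :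
    {p : ℕ × ℕ | 1 < p.1 ∧ p.1 + 1 < p.2 ∧
      ∃ A : Finset ℕ, (∀ a ∈ A, 0 < a) ∧ A.card = p.2 ∧
        (p.2 - 1).choose p.1 ≤ dsk s p.1 A ∧ ¬ IsAntiPencil s p.1 A}.Finite := by
  refine (Set.finite_Iic (sizeThreshold s, sizeThreshold s)).subset ?_
  rintro ⟨k, n⟩ ⟨hk, hkn, A, hpos, hn, hcard, hnot⟩
  obtain rfl : A.card = n := hn
  have hsmall : A.card < sizeThreshold s := by
    by_contra! hlarge
    exact hnot (isAntiPencil_of_choose_le_dsk hs hlarge hpos hk hkn hcard)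
  exact Prod.mk_le_mk.2 ⟨by omega, hsmall.le⟩
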